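/- Let X be a contractible Hausdorff topological space of compact topological dimension exactly n < ∞ (in particular, every open cover of every compact subset of X admits an open refinement in which every point belongs to at most n + 1 members). Let A₁, …, A_m be subsets of X, each contractible as a topological subspace, such that the intersection of every subcollection is either contractible (as a subspace) or empty. Suppose m ≥ n + 2 and that for every subset I ⊆ {1, …, m} with |I| = n + 1 the intersection ⋂_{i∈I} A_i is nonempty. Then ⋂_{i=1}^m A_i is nonempty. -/

import Mathlib

/-- `X` has compact topological dimension at most `n`: every open cover of every
compact subset `K` admits an open refinement covering `K` in which every point of `K`
belongs to at most `n + 1` members. -/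
def CompactTopDimLE (X : Type) [TopologicalSpace X] (n : ℕ) : Prop :=
  ∀ K : Set X, IsCompact K → ∀ (ι : Type) (U : ι → Set X),
    (∀ i, IsOpen (U i)) → K ⊆ ⋃ i, U i →
    ∃ (κ : Type) (V : κ → Set X), (∀ j, IsOpen (V j)) ∧ K ⊆ (⋃ j, V j) ∧
      (∀ j, ∃ i, V j ⊆ U i) ∧
      ∀ x ∈ K, ∃ s : Finset κ, s.card ≤ n + 1 ∧ ∀ j, x ∈ V j → j ∈ s


namespace HellyAux

/-- Mod 2 chains of (ordered, possibly degenerate) simplices with vertices in `E`. -/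
abbrev Ch (E : Type*) := List E →₀ ZMod 2

noncomputable def cone {E : Type*} (a : E) : Ch E →ₗ[ZMod 2] Ch E :=
  Finsupp.lmapDomain (ZMod 2) (ZMod 2) (List.cons a)

noncomputable def bdL {E : Type*} : List E → Ch E
  | [] => 0
  | a :: l => Finsupp.single l 1 + cone a (bdL l)

noncomputable def bd {E : Type*} : Ch E →ₗ[ZMod 2] Ch E :=
  Finsupp.linearCombination (ZMod 2) bdL

@[simp] lemma cone_single {E : Type*} (a : E) (l : List E) (r : ZMod 2) :
    cone a (Finsupp.single l r) = Finsupp.single (a :: l) r := by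
  simp [cone]

@[simp] lemma bd_single {E : Type*} (l : List E) :
    bd (Finsupp.single l 1) = bdL l := by
  simp [bd]

lemma bd_cone {E : Type*} (a : E) (c : Ch E) : bd (cone a c) = c + cone a (bd c) := by
  have : bd ∘ₗ cone a = LinearMap.id + cone a ∘ₗ bd := by
    ext l : 2
    simp [bdL]
  exact LinearMap.congr_fun this c

lemma ch_add_self {E : Type*} (c : Ch E) : c + c = 0 := by
  ext l
  simp [CharTwo.add_self_eq_zero]

lemma bd_bdL {E : Type*} (l : List E) : bd (bdL l) = 0 := by
  induction l with
  | nil => simp [bdL]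
  | cons a l ih => simp [bdL, bd_cone, ih, ch_add_self]

abbrev supp {E : Type*} (S : Set (List E)) : Submodule (ZMod 2) (Ch E) :=
  Finsupp.supported (ZMod 2) (ZMod 2) S

lemma map_supp {E M : Type*} [AddCommGroup M] [Module (ZMod 2) M] (f : Ch E →ₗ[ZMod 2] M)
    (S : Set (List E)) (P : Submodule (ZMod 2) M)
    (h : ∀ l ∈ S, f (Finsupp.single l 1) ∈ P) {c : Ch E} (hc : c ∈ supp S) : f c ∈ P := by
  have : supp S ≤ P.comap f := by
    rw [supp, Finsupp.supported_eq_span_single, Submodule.span_le]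
    rintro _ ⟨l, hl, rfl⟩
    exact h l hl
  exact this hc

lemma supp_mono {E : Type*} {S T : Set (List E)} (h : S ⊆ T) : supp S ≤ supp T :=
  Finsupp.supported_mono h

lemma single_supp {E : Type*} {S : Set (List E)} {l : List E} (h : l ∈ S) :
    Finsupp.single l (1 : ZMod 2) ∈ supp S := Finsupp.single_mem_supported _ _ h

lemma cone_supp {E : Type*} {S T : Set (List E)} (a : E) (h : ∀ l ∈ S, a :: l ∈ T) {c : Ch E}
    (hc : c ∈ supp S) : cone a c ∈ supp T := by
  refine map_supp _ S _ (fun l hl => ?_) hc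
  rw [cone_single]
  exact single_supp (h l hl)

lemma bdL_supp {E : Type*} (l : List E) :
    bdL l ∈ supp {m | m.length + 1 = l.length ∧ m ⊆ l} := by
  induction l with
  | nil => simp [bdL]
  | cons a l ih =>
    refine Submodule.add_mem _ (single_supp ?_) (cone_supp a ?_ ih)
    · simp
    · rintro m ⟨h1, h2⟩
      refine ⟨by simp [← h1], List.cons_subset_cons a h2⟩

lemma bdL_supp_nodup {E : Type*} (l : List E) (hl : l.Nodup) :
    bdL l ∈ supp {m | m ⊆ l ∧ m.length + 1 = l.length ∧ ∃ b ∈ l, b ∉ m} := by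
  induction l with
  | nil => simp [bdL]
  | cons a l ih =>
    rw [List.nodup_cons] at hl
    refine Submodule.add_mem _ (single_supp ?_) (cone_supp a ?_ (ih hl.2))
    · exact ⟨by simp, by simp, a, by simp, hl.1⟩
    · rintro m ⟨h1, h2, b, hb, hbm⟩
      refine ⟨List.cons_subset_cons a h1, by simp [← h2], b, by simp [hb], ?_⟩
      simp only [List.mem_cons, not_or]
      exact ⟨fun h => hl.1 (h ▸ hb), hbm⟩

/-- Subdivision operator with barycenter function `β`. -/
noncomputable def sd {E : Type*} (β : List E → E) : ℕ → Ch E →ₗ[ZMod 2] Ch E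
  | 0 => LinearMap.id
  | n + 1 => Finsupp.linearCombination (ZMod 2) (fun l => cone (β l) (sd β n (bdL l)))

lemma sd_succ_single {E : Type*} (β : List E → E) (n : ℕ) (l : List E) :
    sd β (n + 1) (Finsupp.single l 1) = cone (β l) (sd β n (bdL l)) := by
  simp [sd]

lemma bdL_supp_len {E : Type*} {n : ℕ} {l : List E} (h : l.length = n + 1) :
    bdL l ∈ supp {m | m.length = n} :=
  supp_mono (fun m hm => by have := hm.1; simp only [Set.mem_ofPred_eq]; omega) (bdL_supp l)

lemma bd_sd {E : Type*} (β : List E → E) (n : ℕ) {c : Ch E}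
    (hc : c ∈ supp {l | l.length = n + 1}) : bd (sd β (n + 1) c) = sd β n (bd c) := by
  induction n generalizing c with
  | zero =>
    have := map_supp (bd ∘ₗ sd β 1 - sd β 0 ∘ₗ bd) _ ⊥ (fun l hl => ?_) hc
    · simpa [sub_eq_zero] using this
    · obtain ⟨a, rfl⟩ := List.length_eq_one_iff.1 hl
      simp [sd, bdL]
  | succ n ih =>
    have := map_supp (bd ∘ₗ sd β (n + 2) - sd β (n + 1) ∘ₗ bd) _ ⊥ (fun l hl => ?_) hc
    · simpa [sub_eq_zero] using this
    · have h2 := ih (bdL_supp_len hl)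
      simp only [LinearMap.sub_apply, LinearMap.comp_apply, sd_succ_single, bd_single, bd_cone,
        Submodule.mem_bot]
      rw [h2, bd_bdL]
      simp

/-- Admissible simplices: `n` vertices, in `C`, with diameter at most `D`. -/
def Good {E : Type*} [PseudoMetricSpace E] (n : ℕ) (C : Set E) (D : ℝ) : Set (List E) :=
  {m | m.length = n ∧ (∀ p ∈ m, p ∈ C) ∧ ∀ p ∈ m, ∀ q ∈ m, dist p q ≤ D}

noncomputable def bary {E : Type*} [AddCommGroup E] [Module ℝ E] (l : List E) : E :=
  (l.length : ℝ)⁻¹ • l.sum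

lemma sum_mem_convex {E : Type*} [AddCommGroup E] [Module ℝ E] {C : Set E} (hC : Convex ℝ C)
    (l : List E) (hl : l ≠ []) (h : ∀ p ∈ l, p ∈ C) : bary l ∈ C := by
  have hn : (l.length : ℝ) ≠ 0 := by simpa using hl
  have h1 : bary l = ∑ i : Fin l.length, (l.length : ℝ)⁻¹ • l.get i := by
    rw [← Finset.smul_sum, bary]
    congr 1
    conv_lhs => rw [← List.ofFn_get l]
    rw [List.sum_ofFn]
  rw [h1]
  refine hC.sum_mem (fun _ _ => by positivity) ?_ (fun i _ => h _ (List.get_mem _ _))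
  simp [hn]

lemma norm_sum_le_aux {E : Type*} [NormedAddCommGroup E] [NormedSpace ℝ E]
    (l : List E) (v : E) (D : ℝ) (h : ∀ q ∈ l, dist v q ≤ D) :
    ‖(l.length : ℝ) • v - l.sum‖ ≤ l.length * D := by
  induction l with
  | nil => simp
  | cons a l ih =>
    have h1 := ih (fun q hq => h q (by simp [hq]))
    have h2 := h a (by simp)
    rw [dist_eq_norm] at h2
    have : ((a :: l).length : ℝ) • v - (a :: l).sum = ((l.length : ℝ) • v - l.sum) + (v - a) := by
      simp [add_smul]; abel
    rw [this]
    refine (norm_add_le _ _).trans ?_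
    simp only [List.length_cons]; push_cast; linarith

lemma norm_sum_le_aux2 {E : Type*} [NormedAddCommGroup E] [NormedSpace ℝ E]
    (l : List E) (v : E) (hv : v ∈ l) (D : ℝ) (h : ∀ q ∈ l, dist v q ≤ D) :
    ‖(l.length : ℝ) • v - l.sum‖ ≤ (l.length - 1) * D := by
  obtain ⟨s, t, rfl⟩ := List.append_of_mem hv
  have h1 := norm_sum_le_aux (s ++ t) v D (fun q hq => h q (by simp at hq ⊢; tauto))
  have : ((s ++ v :: t).length : ℝ) • v - (s ++ v :: t).sum =
      ((s ++ t).length : ℝ) • v - (s ++ t).sum := by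
    simp [add_smul]; abel
  rw [this]
  refine h1.trans (le_of_eq ?_)
  simp; left; ring

lemma dist_bary {E : Type*} [NormedAddCommGroup E] [NormedSpace ℝ E] (K : ℕ)
    (l : List E) (hl : l.length ≤ K + 1) (D : ℝ) (hD : 0 ≤ D)
    (h : ∀ p ∈ l, ∀ q ∈ l, dist p q ≤ D) (v : E) (hv : v ∈ l) :
    dist v (bary l) ≤ (K / (K + 1) : ℝ) * D := by
  have h1 := norm_sum_le_aux2 l v hv D (h v hv)
  have hpos : (0 : ℝ) < l.length := by
    have := List.length_pos_of_mem hv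
    exact_mod_cast this
  have : v - bary l = (l.length : ℝ)⁻¹ • ((l.length : ℝ) • v - l.sum) := by
    rw [smul_sub, bary, smul_smul, inv_mul_cancel₀ hpos.ne', one_smul]
  rw [dist_eq_norm, this, norm_smul, norm_inv, Real.norm_natCast]
  have hl' : (l.length : ℝ) ≤ K + 1 := by exact_mod_cast hl
  calc (l.length : ℝ)⁻¹ * _ ≤ (l.length : ℝ)⁻¹ * ((l.length - 1) * D) := by gcongr
    _ = ((l.length - 1) / l.length) * D := by field_simp
    _ ≤ _ := by
      refine mul_le_mul_of_nonneg_right ?_ hD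
      rw [div_le_div_iff₀ hpos (by positivity)]
      nlinarith

lemma sd_good {E : Type*} [NormedAddCommGroup E] [NormedSpace ℝ E] (K : ℕ) (n : ℕ)
    (hn : n ≤ K + 1) (D : ℝ) (hD : 0 ≤ D) (C : Set E) (hC : Convex ℝ C) (c : Ch E)
    (hc : c ∈ supp (Good n C D)) : sd bary n c ∈ supp (Good n C ((K / (K + 1) : ℝ) * D)) := by
  induction n generalizing C c with
  | zero =>
    refine supp_mono ?_ hc
    rintro l ⟨h, -, -⟩
    rw [List.length_eq_zero_iff] at h
    subst h
    simp [Good]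
  | succ n ih =>
    refine map_supp _ _ _ ?_ hc
    rintro l ⟨h1, h2, h3⟩
    have hne : l ≠ [] := by rintro rfl; simp at h1
    rw [sd_succ_single]
    have hb : bdL l ∈ supp (Good n (convexHull ℝ {p | p ∈ l}) D) := by
      refine supp_mono ?_ (bdL_supp l)
      rintro m ⟨h4, h5⟩
      refine ⟨by omega, fun p hp => subset_convexHull _ _ (h5 hp),
        fun p hp q hq => h3 _ (h5 hp) _ (h5 hq)⟩
    refine cone_supp _ ?_ (ih (by omega) _ (convex_convexHull ℝ _) _ hb)
    rintro m ⟨h4, h5, h6⟩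
    have hbd : ∀ p ∈ m, dist p (bary l) ≤ (K / (K + 1) : ℝ) * D := by
      intro p hp
      have : convexHull ℝ {p | p ∈ l} ⊆ Metric.closedBall (bary l) ((K / (K + 1) : ℝ) * D) :=
        convexHull_min (fun v hv => dist_bary K l (by omega) D hD h3 v hv)
          (convex_closedBall _ _)
      exact this (h5 p hp)
    have hr : 0 ≤ (K / (K + 1) : ℝ) * D := by positivity
    refine ⟨by simp [h4], ?_, ?_⟩
    · intro p hp
      rcases List.mem_cons.1 hp with rfl | hp
      · exact sum_mem_convex hC l hne h2
      · exact convexHull_min (fun v hv => h2 v hv) hC (h5 p hp)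
    · intro p hp q hq
      rcases List.mem_cons.1 hp with rfl | hp <;> rcases List.mem_cons.1 hq with rfl | hq
      · simpa using hr
      · rw [dist_comm]; exact hbd q hq
      · exact hbd p hp
      · exact h6 p hp q hq

noncomputable def sdN {E : Type*} [NormedAddCommGroup E] [NormedSpace ℝ E] (N n : ℕ) :
    Ch E →ₗ[ZMod 2] Ch E := (sd bary n) ^ N

lemma sdN_good {E : Type*} [NormedAddCommGroup E] [NormedSpace ℝ E] (N : ℕ) (K : ℕ) (n : ℕ)
    (hn : n ≤ K + 1) (D : ℝ) (hD : 0 ≤ D) (C : Set E) (hC : Convex ℝ C) (c : Ch E)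
    (hc : c ∈ supp (Good n C D)) :
    sdN N n c ∈ supp (Good n C ((K / (K + 1) : ℝ) ^ N * D)) := by
  induction N with
  | zero => simpa [sdN] using hc
  | succ N ih =>
    have := sd_good K n hn _ (by positivity) C hC _ ih
    rw [sdN, pow_succ', pow_succ', mul_assoc]
    exact this

lemma Good_len {E : Type*} [PseudoMetricSpace E] (n : ℕ) (C : Set E) (D : ℝ) :
    Good n C D ⊆ {l | l.length = n} := fun _ h => h.1

lemma bd_sdN {E : Type*} [NormedAddCommGroup E] [NormedSpace ℝ E] (N n : ℕ) (C : Set E)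
    (hC : Convex ℝ C) (D : ℝ) (hD : 0 ≤ D) {c : Ch E}
    (hc : c ∈ supp (Good (n + 1) C D)) : bd (sdN N (n + 1) c) = sdN N n (bd c) := by
  induction N with
  | zero => simp [sdN]
  | succ N ih =>
    have h1 := sdN_good N n (n + 1) le_rfl D hD C hC c hc
    have h2 := bd_sd bary n (supp_mono (Good_len _ _ _) h1)
    rw [ih] at h2
    rw [sdN, sdN, pow_succ', pow_succ']
    exact h2

/-- `psi T l = 1` iff `l` enumerates `T` without repetition. -/
def psi {ι : Type*} [DecidableEq ι] : Finset ι → List ι → ZMod 2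
  | T, [] => if T = ∅ then 1 else 0
  | T, a :: l => if a ∈ T then psi (T.erase a) l else 0

lemma psi_mem {ι : Type*} [DecidableEq ι] (l : List ι) (T : Finset ι) (h : psi T l ≠ 0) (a : ι) :
    a ∈ T ↔ a ∈ l := by
  induction l generalizing T with
  | nil =>
    simp only [psi, ne_eq, ite_eq_right_iff, one_ne_zero, imp_false, not_not] at h
    simp [h]
  | cons b l ih =>
    by_cases hb : b ∈ T
    · simp only [psi, hb, if_true] at h
      have := ih _ h
      rw [List.mem_cons, ← this, Finset.mem_erase]
      by_cases hab : a = b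
      · simp [hab, hb]
      · simp [hab]
    · simp [psi, hb] at h

noncomputable def Psi {E ι : Type*} [DecidableEq ι] (lam : E → ι) (T : Finset ι) :
    Ch E →ₗ[ZMod 2] ZMod 2 := Finsupp.linearCombination (ZMod 2) (fun m => psi T (m.map lam))

lemma Psi_single {E ι : Type*} [DecidableEq ι] (lam : E → ι) (T : Finset ι) (l : List E) :
    Psi lam T (Finsupp.single l 1) = psi T (l.map lam) := by simp [Psi]

lemma Psi_cone {E ι : Type*} [DecidableEq ι] (lam : E → ι) (T : Finset ι) (a : E) (c : Ch E) :
    Psi lam T (cone a c) = if lam a ∈ T then Psi lam (T.erase (lam a)) c else 0 := by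
  have : Psi lam T ∘ₗ cone a = if lam a ∈ T then Psi lam (T.erase (lam a)) else 0 := by
    ext l
    split_ifs with h <;> simp [Psi, psi, h]
  have := LinearMap.congr_fun this c
  rw [LinearMap.comp_apply] at this
  rw [this]
  split_ifs <;> rfl

lemma Psi_bdL {E ι : Type*} [Fintype ι] [DecidableEq ι] (lam : E → ι) (l : List E)
    (T : Finset ι) :
    Psi lam T (bdL l) = ∑ x ∈ Tᶜ, psi (insert x T) (l.map lam) := by
  induction l generalizing T with
  | nil => simp [bdL, psi]
  | cons a l ih =>
    simp only [bdL, map_add, Psi_single, Psi_cone, List.map_cons, psi]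
    by_cases h : lam a ∈ T
    · rw [if_pos h, ih]
      have e1 : (T.erase (lam a))ᶜ = insert (lam a) Tᶜ := by
        ext x; simp
      rw [e1, Finset.sum_insert (by simp [h]), Finset.insert_erase h, ← add_assoc,
        CharTwo.add_self_eq_zero, zero_add]
      refine Finset.sum_congr rfl fun x hx => ?_
      have hx' : x ≠ lam a := by rintro rfl; simp [h] at hx
      rw [if_pos (by simp [h]), Finset.erase_insert_of_ne hx']
    · rw [if_neg h, add_zero, Finset.sum_eq_single (lam a)]
      · simp [h]
      · intro x _ hx
        rw [if_neg]
        simp [h, hx.symm]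
      · simp [h]

lemma Psi_bd {E ι : Type*} [Fintype ι] [DecidableEq ι] (lam : E → ι) (c : Ch E)
    (T : Finset ι) :
    Psi lam T (bd c) = ∑ x ∈ Tᶜ, Psi lam (insert x T) c := by
  have : Psi lam T ∘ₗ bd = ∑ x ∈ Tᶜ, Psi lam (insert x T) := by
    ext l
    simp [Psi_bdL, Psi_single]
  have := LinearMap.congr_fun this c
  simpa [LinearMap.sum_apply] using this

lemma Psi_zero {E ι : Type*} [DecidableEq ι] (lam : E → ι) (T : Finset ι) (S : Set (List E))
    (h : ∀ m ∈ S, psi T (m.map lam) = 0) {c : Ch E} (hc : c ∈ supp S) : Psi lam T c = 0 := by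
  have := map_supp (Psi lam T) S ⊥ (fun l hl => by simp [Psi_single, h l hl]) hc
  simpa using this

end HellyAux

namespace HellyAux

/-- Face of the standard simplex spanned by `T`. -/
def face {ι : Type*} [Fintype ι] (T : Finset ι) : Set (ι → ℝ) :=
  {x | x ∈ stdSimplex ℝ ι ∧ ∀ i, i ∉ T → x i = 0}

lemma convex_face {ι : Type*} [Fintype ι] (T : Finset ι) : Convex ℝ (face T) := by
  intro x hx y hy a b ha hb hab
  refine ⟨convex_stdSimplex ℝ ι hx.1 hy.1 ha hb hab, fun i hi => ?_⟩
  simp [hx.2 i hi, hy.2 i hi]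

lemma isClosed_face {ι : Type*} [Fintype ι] (T : Finset ι) : IsClosed (face T) := by
  have : face T = stdSimplex ℝ ι ∩ ⋂ i, ⋂ (_ : i ∉ T), {x | x i = 0} := by
    ext x; simp [face]
  rw [this]
  refine (isClosed_stdSimplex ℝ ι).inter (isClosed_iInter fun i => isClosed_iInter fun _ => ?_)
  exact isClosed_eq (continuous_apply i) continuous_const

lemma isCompact_face {ι : Type*} [Fintype ι] (T : Finset ι) : IsCompact (face T) :=
  (isCompact_stdSimplex ℝ ι).of_isClosed_subset (isClosed_face T) (fun _ h => h.1)

lemma face_mono {ι : Type*} [Fintype ι] {S T : Finset ι} (h : S ⊆ T) : face S ⊆ face T :=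
  fun _ hx => ⟨hx.1, fun i hi => hx.2 i (fun hS => hi (h hS))⟩

lemma single_mem_face {ι : Type*} [Fintype ι] [DecidableEq ι] {T : Finset ι} {i : ι}
    (h : i ∈ T) : (Pi.single i 1 : ι → ℝ) ∈ face T := by
  refine ⟨single_mem_stdSimplex ℝ i, fun j hj => ?_⟩
  have : j ≠ i := by rintro rfl; exact hj h
  simp [this]

lemma stdSimplex_dist {ι : Type*} [Fintype ι] {x y : ι → ℝ} (hx : x ∈ stdSimplex ℝ ι)
    (hy : y ∈ stdSimplex ℝ ι) : dist x y ≤ Metric.diam (stdSimplex ℝ ι) :=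
  Metric.dist_le_diam_of_mem (isCompact_stdSimplex ℝ ι).isBounded hx hy

lemma sperner {ι : Type*} [Fintype ι] [DecidableEq ι] (lam : (ι → ℝ) → ι)
    (hlam : ∀ x ∈ stdSimplex ℝ ι, x (lam x) ≠ 0) (N : ℕ) (L : List ι) (hL : L.Nodup) :
    Psi lam L.toFinset (sdN N L.length
      (Finsupp.single (L.map (fun i => (Pi.single i 1 : ι → ℝ))) 1)) = 1 := by
  set D := Metric.diam (stdSimplex ℝ ι) with hDdef
  have hD : 0 ≤ D := Metric.diam_nonneg
  set e : ι → (ι → ℝ) := fun i => Pi.single i 1 with he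
  have einj : Function.Injective e := fun i j h => by
    by_contra hij
    have := congrFun h i
    simp [he, hij] at this
  induction L with
  | nil =>
    have h0 : sd (E := ι → ℝ) bary 0 = 1 := rfl
    simp [sdN, h0, Psi_single, psi]
  | cons a L ih =>
    have hL' := List.nodup_cons.1 hL
    have hgood : Finsupp.single ((a :: L).map e) 1 ∈
        supp (Good (L.length + 1) (face (a :: L).toFinset) D) := by
      refine single_supp ⟨by simp, ?_, ?_⟩
      · intro p hp
        obtain ⟨i, hi, rfl⟩ := List.mem_map.1 hp
        exact single_mem_face (List.mem_toFinset.2 hi)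
      · intro p hp q hq
        obtain ⟨i, hi, rfl⟩ := List.mem_map.1 hp
        obtain ⟨j, hj, rfl⟩ := List.mem_map.1 hq
        exact stdSimplex_dist (single_mem_stdSimplex ℝ i) (single_mem_stdSimplex ℝ j)
    set c := sdN N (L.length + 1) (Finsupp.single ((a :: L).map e) 1) with hc
    have hcg := sdN_good N L.length (L.length + 1) le_rfl D hD _ (convex_face _) _ hgood
    have h1 := Psi_bd lam c L.toFinset
    have h2 : bd c = sdN N L.length (bd (Finsupp.single ((a :: L).map e) 1)) :=
      bd_sdN N L.length _ (convex_face _) D hD hgood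
    have h3 : ∑ x ∈ L.toFinsetᶜ, Psi lam (insert x L.toFinset) c =
        Psi lam (insert a L.toFinset) c := by
      refine Finset.sum_eq_single a ?_ ?_
      · intro x hx hxa
        refine Psi_zero lam _ _ ?_ hcg
        rintro m ⟨-, h5, -⟩
        by_contra h6
        have h7 := (psi_mem _ _ h6 x).1 (by simp)
        obtain ⟨p, hp, rfl⟩ := List.mem_map.1 h7
        refine hlam p (h5 p hp).1 ((h5 p hp).2 _ ?_)
        simp at hx ⊢
        tauto
      · intro h
        simp [hL'.1] at h
    have h4 : Psi lam L.toFinset (sdN N L.length (cone (e a) (bdL (L.map e)))) = 0 := by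
      have hb := bdL_supp_nodup (L.map e) (hL'.2.map einj)
      refine map_supp (Psi lam L.toFinset ∘ₗ sdN N L.length ∘ₗ cone (e a)) _ ⊥ ?_ hb
      rintro m ⟨h5, h6, b, hb, hbm⟩
      obtain ⟨b, hbL, rfl⟩ := List.mem_map.1 hb
      have hba : b ≠ a := by rintro rfl; exact hL'.1 hbL
      have hall : ∀ p ∈ e a :: m, ∃ i, i ≠ b ∧ p = e i := by
        intro p hp
        rcases List.mem_cons.1 hp with rfl | hp
        · exact ⟨a, hba.symm, rfl⟩
        · obtain ⟨i, hi, rfl⟩ := List.mem_map.1 (h5 hp)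
          exact ⟨i, by rintro rfl; exact hbm hp, rfl⟩
      have hg : Finsupp.single (e a :: m) 1 ∈
          supp (Good L.length (face (Finset.univ.erase b)) D) := by
        refine single_supp ⟨by simpa using h6, ?_, ?_⟩
        · intro p hp
          obtain ⟨i, hi, rfl⟩ := hall p hp
          exact single_mem_face (by simp [hi])
        · intro p hp q hq
          obtain ⟨i, hi, rfl⟩ := hall p hp
          obtain ⟨j, hj, rfl⟩ := hall q hq
          exact stdSimplex_dist (single_mem_stdSimplex ℝ i) (single_mem_stdSimplex ℝ j)
      have hg2 := sdN_good N L.length L.length (by omega) D hD _ (convex_face _) _ hg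
      simp only [LinearMap.comp_apply, cone_single, Submodule.mem_bot]
      refine Psi_zero lam _ _ ?_ hg2
      rintro m' ⟨-, h5, -⟩
      by_contra h6
      have h7 := (psi_mem _ _ h6 b).1 (by simpa using hbL)
      obtain ⟨p, hp, rfl⟩ := List.mem_map.1 h7
      exact hlam p (h5 p hp).1 ((h5 p hp).2 _ (by simp))
    rw [List.toFinset_cons, List.length_cons, ← hc, ← h3, ← h1, h2, bd_single, List.map_cons, bdL,
      map_add, map_add, h4, add_zero]
    exact ih hL'.2

lemma kkm {ι : Type*} [Fintype ι] [Nonempty ι] (W : ι → Set (ι → ℝ)) (hW : ∀ i, IsOpen (W i))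
    (hcov : stdSimplex ℝ ι ⊆ ⋃ i, W i)
    (hface : ∀ i, ∀ x ∈ stdSimplex ℝ ι, x ∈ W i → x i ≠ 0) :
    ∃ x ∈ stdSimplex ℝ ι, ∀ i, x ∈ W i := by
  classical
  obtain ⟨δ, hδ, hleb⟩ := lebesgue_number_lemma_of_metric (isCompact_stdSimplex ℝ ι) hW hcov
  choose! lam hlam using hleb
  have hlam' : ∀ x ∈ stdSimplex ℝ ι, x (lam x) ≠ 0 := fun x hx =>
    hface _ x hx (hlam x hx (Metric.mem_ball_self hδ))
  set L := (Finset.univ : Finset ι).toList with hLdef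
  set K := L.length
  set D := Metric.diam (stdSimplex ℝ ι) with hDdef
  have hD : 0 ≤ D := Metric.diam_nonneg
  obtain ⟨N, hN⟩ : ∃ N : ℕ, (K / (K + 1) : ℝ) ^ N * D < δ := by
    have h1 : Filter.Tendsto (fun N : ℕ => (K / (K + 1) : ℝ) ^ N * D) Filter.atTop
        (nhds (0 * D)) := by
      refine (tendsto_pow_atTop_nhds_zero_of_lt_one (by positivity) ?_).mul_const D
      rw [div_lt_one (by positivity)]; linarith
    rw [zero_mul] at h1
    exact (h1.eventually (gt_mem_nhds hδ)).exists
  have hs := sperner lam hlam' N L (Finset.nodup_toList _)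
  have hgood : Finsupp.single (L.map (fun i => (Pi.single i 1 : ι → ℝ))) 1 ∈
      supp (Good K (stdSimplex ℝ ι) D) := by
    refine single_supp ⟨by simp [K], ?_, ?_⟩
    · intro p hp
      obtain ⟨i, hi, rfl⟩ := List.mem_map.1 hp
      exact single_mem_stdSimplex ℝ i
    · intro p hp q hq
      obtain ⟨i, hi, rfl⟩ := List.mem_map.1 hp
      obtain ⟨j, hj, rfl⟩ := List.mem_map.1 hq
      exact stdSimplex_dist (single_mem_stdSimplex ℝ i) (single_mem_stdSimplex ℝ j)
  have hg := sdN_good N K K (by omega) D hD _ (convex_stdSimplex ℝ ι) _ hgood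
  by_contra hcon
  have h0 := Psi_zero lam L.toFinset _ ?_ hg
  · rw [h0] at hs
    exact zero_ne_one hs
  · rintro m ⟨-, h5, h6⟩
    by_contra h7
    have hall : ∀ i, ∃ p ∈ m, lam p = i := fun i => by
      have := (psi_mem _ _ h7 i).1 (by simp [L])
      simpa using this
    obtain ⟨i₀⟩ := ‹Nonempty ι›
    obtain ⟨p₀, hp₀, -⟩ := hall i₀
    refine hcon ⟨p₀, h5 _ hp₀, fun i => ?_⟩
    obtain ⟨p, hp, rfl⟩ := hall i
    exact hlam p (h5 p hp) (Metric.mem_ball.2 ((h6 _ hp₀ _ hp).trans_lt hN))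

end HellyAux

namespace HellyAux

open unitInterval in
lemma extend_face {ι X : Type*} [Fintype ι] [DecidableEq ι] [TopologicalSpace X] (J : Finset ι)
    (hJ : J.Nonempty) (B : Set X) [ContractibleSpace B] (F : (ι → ℝ) → X)
    (hF : ContinuousOn F {x | x ∈ face J ∧ ∃ i ∈ J, x i = 0})
    (hFB : ∀ x ∈ face J, (∃ i ∈ J, x i = 0) → F x ∈ B) :
    ∃ G : (ι → ℝ) → X, ContinuousOn G (face J) ∧ (∀ x ∈ face J, G x ∈ B) ∧
      ∀ x ∈ face J, (∃ i ∈ J, x i = 0) → G x = F x := by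
  classical
  obtain ⟨c, ⟨H⟩⟩ := id_nullhomotopic B
  set bdry : Set (ι → ℝ) := {x | x ∈ face J ∧ ∃ i ∈ J, x i = 0} with hbdry
  set μ : (ι → ℝ) → ℝ := fun x => J.inf' hJ (fun i => x i) with hμ
  have hμc : Continuous μ :=
    Continuous.finset_inf'_apply hJ (fun i _ => continuous_apply i)
  set n : ℝ := (J.card : ℝ) with hn
  set s : (ι → ℝ) → I := fun x => Set.projIcc 0 1 zero_le_one (2 * (n * μ x)) with hs
  have hsc : Continuous s := continuous_projIcc.comp (by fun_prop)
  set y : (ι → ℝ) → (ι → ℝ) := fun x i => if i ∈ J then (x i - μ x) / (1 - n * μ x) else 0 with hy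
  set F' : (ι → ℝ) → B := fun z => if h : F z ∈ B then ⟨F z, h⟩ else c with hF'
  have hF'c : ContinuousOn F' bdry := by
    rw [Topology.IsInducing.subtypeVal.continuousOn_iff]
    refine hF.congr fun x hx => ?_
    simp [hF', hFB x hx.1 hx.2]
  have hymaps : ∀ x ∈ face J, n * μ x < 1 → y x ∈ bdry := by
    intro x hx hlt
    have hpos : 0 < 1 - n * μ x := by linarith
    refine ⟨⟨⟨fun i => ?_, ?_⟩, fun i hi => by simp [hy, hi]⟩, ?_⟩
    · simp only [hy]
      split_ifs with h
      · exact div_nonneg (sub_nonneg.2 (Finset.inf'_le _ h)) hpos.le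
      · exact le_rfl
    · simp only [hy]
      rw [← Finset.sum_filter, ← Finset.sum_div]
      have hsum : ∑ i ∈ J, x i = 1 := by
        rw [← hx.1.2]
        exact Finset.sum_subset (Finset.subset_univ _) (fun i _ hi => hx.2 i hi)
      have : Finset.univ.filter (fun i => i ∈ J) = J := by ext; simp
      rw [this, Finset.sum_sub_distrib, hsum, Finset.sum_const, nsmul_eq_mul]
      exact div_self hpos.ne'
    · obtain ⟨i, hi, hii⟩ := Finset.exists_mem_eq_inf' hJ (fun i => x i)
      refine ⟨i, hi, ?_⟩
      have : x i = μ x := hii.symm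
      simp [hy, this]
  have hyc : ContinuousOn y {x | n * μ x < 1} := by
    rw [continuousOn_pi]
    intro i
    by_cases h : i ∈ J
    · simp only [hy, h, if_true]
      refine ContinuousOn.div (by fun_prop) (by fun_prop) ?_
      intro x hx
      have : n * μ x < 1 := hx
      linarith
    · simp only [hy, h, if_false]
      exact continuousOn_const
  have hgc : ContinuousOn (fun x => (H (s x, F' (y x)) : B)) (face J) := by
    intro x hx
    by_cases hlt : n * μ x < 1
    · have hopen : IsOpen {x | n * μ x < 1} := isOpen_lt (by fun_prop) continuous_const
      have h1 : ContinuousOn (fun x => (H (s x, F' (y x)) : B)) (face J ∩ {x | n * μ x < 1}) := by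
        refine H.continuous.comp_continuousOn (hsc.continuousOn.prodMk ?_)
        exact hF'c.comp (hyc.mono Set.inter_subset_right) (fun x hx => hymaps x hx.1 hx.2)
      refine (h1 x ⟨hx, hlt⟩).mono_of_mem_nhdsWithin ?_
      exact inter_mem_nhdsWithin _ (hopen.mem_nhds hlt)
    · have hopen : IsOpen {x | 1 < 2 * (n * μ x)} := isOpen_lt continuous_const (by fun_prop)
      have hx1 : x ∈ {x | 1 < 2 * (n * μ x)} := by
        show 1 < 2 * (n * μ x)
        linarith
      refine ContinuousAt.continuousWithinAt ?_
      refine (continuousAt_const (y := c)).congr ?_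
      filter_upwards [hopen.mem_nhds hx1] with z hz
      have hz' : s z = 1 := Set.projIcc_of_right_le _ (le_of_lt hz)
      rw [hz', H.apply_one]
      rfl
  refine ⟨fun x => (H (s x, F' (y x)) : B), continuous_subtype_val.comp_continuousOn hgc,
    fun x _ => Subtype.prop _, ?_⟩
  rintro x hx ⟨i, hi, hxi⟩
  have hμ0 : μ x = 0 := by
    apply le_antisymm
    · rw [← hxi]; exact Finset.inf'_le (fun i => x i) hi
    · exact Finset.le_inf' hJ _ (fun j _ => hx.1.1 j)
  have hs0 : s x = 0 := by
    simp only [hs, hμ0]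
    exact Set.projIcc_of_le_left _ (by simp)
  have hyx : y x = x := by
    ext j
    by_cases h : j ∈ J
    · simp [hy, h, hμ0]
    · simp [hy, h, hx.2 j h]
  have hFx : F x ∈ B := hFB x hx ⟨i, hi, hxi⟩
  simp [hs0, hyx, H.apply_zero, hF', hFx]

lemma exists_map {ι X : Type*} [Fintype ι] [TopologicalSpace X] [Nonempty X]
    (B : Finset ι → Set X) (hmono : ∀ S T, S ⊆ T → B S ⊆ B T)
    (hB : ∀ J, J.Nonempty → ContractibleSpace (B J)) (d : ℕ) :
    ∃ F : (ι → ℝ) → X, ∀ J : Finset ι, J.card ≤ d →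
      ContinuousOn F (face J) ∧ ∀ x ∈ face J, F x ∈ B J := by
  classical
  induction d with
  | zero =>
    refine ⟨fun _ => Classical.arbitrary X, fun J hJ => ?_⟩
    have : J = ∅ := by simpa using hJ
    subst this
    refine ⟨continuousOn_const, fun x hx => ?_⟩
    have h1 : ∑ i, x i = 0 := Finset.sum_eq_zero (fun i _ => hx.2 i (by simp))
    rw [hx.1.2] at h1
    exact absurd h1 one_ne_zero
  | succ d ih =>
    obtain ⟨F, hF⟩ := ih
    have key : ∀ J : Finset ι, J.card = d + 1 → ∃ G : (ι → ℝ) → X,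
        ContinuousOn G (face J) ∧ (∀ x ∈ face J, G x ∈ B J) ∧
        ∀ x ∈ face J, (∃ i ∈ J, x i = 0) → G x = F x := by
      intro J hJ
      have hne : J.Nonempty := by rw [← Finset.card_pos]; omega
      have := hB J hne
      have hsub : ∀ x ∈ face J, ∀ i ∈ J, x i = 0 → x ∈ face (J.erase i) := by
        intro x hx i hi hxi
        refine ⟨hx.1, fun j hj => ?_⟩
        by_cases hji : j = i
        · rw [hji, hxi]
        · exact hx.2 j (fun h => hj (Finset.mem_erase.2 ⟨hji, h⟩))
      have hcard : ∀ i ∈ J, (J.erase i).card ≤ d := fun i hi => by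
        rw [Finset.card_erase_of_mem hi]; omega
      refine extend_face J hne (B J) F ?_ ?_
      · have h1 : ContinuousOn F (⋃ i : J, face (J.erase i)) :=
          (locallyFinite_of_finite _).continuousOn_iUnion (fun i => isClosed_face _)
            (fun i => (hF _ (hcard i i.2)).1)
        refine h1.mono ?_
        rintro x ⟨hx, i, hi, hxi⟩
        exact Set.mem_iUnion.2 ⟨⟨i, hi⟩, hsub x hx i hi hxi⟩
      · rintro x hx ⟨i, hi, hxi⟩
        exact hmono _ _ (Finset.erase_subset i J) ((hF _ (hcard i hi)).2 x (hsub x hx i hi hxi))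
    choose! G hG using key
    set sp : (ι → ℝ) → Finset ι := fun x => Finset.univ.filter (fun i => x i ≠ 0) with hsp
    have hspJ : ∀ J, ∀ x ∈ face J, sp x ⊆ J := by
      intro J x hx i hi
      by_contra h
      simp [hsp, hx.2 i h] at hi
    refine ⟨fun x => if (sp x).card ≤ d then F x else G (sp x) x, fun J hJ => ?_⟩
    rcases Nat.lt_or_ge d J.card with h | h
    · have hJ' : J.card = d + 1 := by omega
      obtain ⟨g1, g2, g3⟩ := hG J hJ'
      have heq : ∀ x ∈ face J, (if (sp x).card ≤ d then F x else G (sp x) x) = G J x := by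
        intro x hx
        split_ifs with h1
        · refine (g3 x hx ?_).symm
          by_contra! h2
          have : J ⊆ sp x := fun i hi => by simp [hsp, h2 i hi]
          have := Finset.card_le_card this
          omega
        · rw [Finset.eq_of_subset_of_card_le (hspJ J x hx) (by omega)]
      refine ⟨g1.congr heq, fun x hx => ?_⟩
      simp only [heq x hx]
      exact g2 x hx
    · have heq : ∀ x ∈ face J, (if (sp x).card ≤ d then F x else G (sp x) x) = F x := by
        intro x hx
        rw [if_pos ((Finset.card_le_card (hspJ J x hx)).trans h)]
      refine ⟨(hF J h).1.congr heq, fun x hx => ?_⟩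
      simp only [heq x hx]
      exact (hF J h).2 x hx

end HellyAux

/-- Topological Helly theorem: in a contractible Hausdorff space of compact
topological dimension exactly `n`, a finite family of `m ≥ n + 2` contractible sets,
all of whose subfamily intersections are contractible or empty, has nonempty total
intersection provided every `n + 1` of the sets have a common point. -/
theorem topological_helly {X : Type} [TopologicalSpace X] [T2Space X]
    [ContractibleSpace X]
    (n : ℕ) (hdim : CompactTopDimLE X n)
    (hdim_exact : ∀ k : ℕ, CompactTopDimLE X k → n ≤ k)
    (m : ℕ) (A : Fin m → Set X)
    (hA : ∀ i : Fin m, ContractibleSpace (A i))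
    (hconn : ∀ s : Finset (Fin m),
      ContractibleSpace ↥(⋂ i ∈ s, A i) ∨ (⋂ i ∈ s, A i) = ∅)
    (hm : n + 2 ≤ m)
    (hinter : ∀ s : Finset (Fin m), s.card = n + 1 → (⋂ i ∈ s, A i).Nonempty) :
    (⋂ i, A i).Nonempty := by
  classical
  have : Nonempty X := (ContractibleSpace.hequiv_unit X).elim fun e => ⟨e.invFun ()⟩
  by_contra hempty
  -- a minimal subfamily with empty intersection
  have hex : ∃ s : Finset (Fin m), (⋂ i ∈ s, A i) = ∅ :=
    ⟨Finset.univ, by simpa using Set.not_nonempty_iff_eq_empty.1 hempty⟩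
  obtain ⟨I, hI, hmin⟩ : ∃ I : Finset (Fin m), (⋂ i ∈ I, A i) = ∅ ∧
      ∀ s : Finset (Fin m), s ⊂ I → (⋂ i ∈ s, A i).Nonempty := by
    obtain ⟨I, hI⟩ := (Set.toFinite {s : Finset (Fin m) | (⋂ i ∈ s, A i) = ∅}).exists_minimal hex
    refine ⟨I, hI.prop, fun s hs => ?_⟩
    by_contra h
    exact hI.not_prop_of_lt hs (Set.not_nonempty_iff_eq_empty.1 h)
  have hIcard : n + 2 ≤ I.card := by
    by_contra hlt
    obtain ⟨t, hIt, -, ht⟩ := Finset.exists_subsuperset_card_eq (Finset.subset_univ I)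
      (show I.card ≤ n + 1 by omega) (by simp; omega)
    obtain ⟨x, hx⟩ := hinter t ht
    have : x ∈ ⋂ i ∈ I, A i := by
      simp only [Set.mem_iInter] at hx ⊢
      exact fun i hi => hx i (hIt hi)
    rw [hI] at this
    exact this
  have : Nonempty I := by
    have : I.Nonempty := by rw [← Finset.card_pos]; omega
    exact this.to_subtype
  set B : Finset I → Set X := fun J => ⋂ i ∈ (Jᶜ).map (Function.Embedding.subtype _), A i with hBdef
  have hBmem : ∀ J x, x ∈ B J ↔ ∀ i : I, i ∉ J → x ∈ A i := by
    intro J x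
    simp [hBdef]
  have hBmono : ∀ S T, S ⊆ T → B S ⊆ B T := by
    intro S T h x hx
    rw [hBmem] at hx ⊢
    exact fun i hi => hx i (fun h' => hi (h h'))
  have hBc : ∀ J : Finset I, J.Nonempty → ContractibleSpace (B J) := by
    rintro J ⟨j, hj⟩
    refine (hconn _).resolve_right ?_
    refine Set.nonempty_iff_ne_empty.1 ?_
    refine hmin _ ⟨?_, fun h => ?_⟩
    · intro i hi
      simp at hi
      exact hi.1
    · have := h j.2
      simp [hj] at this
  obtain ⟨F, hF⟩ := HellyAux.exists_map B hBmono hBc (Fintype.card I)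
  have hfu : HellyAux.face (Finset.univ : Finset I) = stdSimplex ℝ I := by
    ext x; simp [HellyAux.face]
  have hFc : ContinuousOn F (stdSimplex ℝ I) := by
    rw [← hfu]; exact (hF Finset.univ le_rfl).1
  set C : I → Set X := fun i => F '' HellyAux.face (Finset.univ.erase i) with hC
  have hCA : ∀ i, C i ⊆ A i := by
    rintro i _ ⟨x, hx, rfl⟩
    exact (hBmem _ _).1 ((hF _ (Finset.card_le_univ _)).2 x hx) i (by simp)
  have hCcl : ∀ i, IsClosed (C i) := fun i =>
    ((HellyAux.isCompact_face _).image_of_continuousOn (hF _ (Finset.card_le_univ _)).1).isClosed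
  have hK : IsCompact (F '' stdSimplex ℝ I) :=
    (isCompact_stdSimplex ℝ I).image_of_continuousOn hFc
  obtain ⟨κ, V, hVo, hVcov, hVU, hVm⟩ := hdim _ hK I (fun i => (C i)ᶜ)
    (fun i => (hCcl i).isOpen_compl) (by
      intro x _
      by_contra h
      simp only [Set.mem_iUnion, Set.mem_compl_iff, not_exists, not_not] at h
      have : x ∈ ⋂ i ∈ I, A i := by
        simp only [Set.mem_iInter]
        exact fun i hi => hCA ⟨i, hi⟩ (h ⟨i, hi⟩)
      rw [hI] at this
      exact this)
  choose a ha using hVU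
  have hopen : ∀ i : I, ∃ W : Set (I → ℝ), IsOpen W ∧
      F ⁻¹' (⋃ j, ⋃ (_ : a j = i), V j) ∩ stdSimplex ℝ I = W ∩ stdSimplex ℝ I := fun i =>
    (continuousOn_iff'.1 hFc) _ (isOpen_iUnion fun j => isOpen_iUnion fun _ => hVo j)
  choose W hWo hW using hopen
  have hWiff : ∀ i, ∀ x ∈ stdSimplex ℝ I, x ∈ W i ↔ ∃ j, a j = i ∧ F x ∈ V j := by
    intro i x hx
    have h1 : x ∈ F ⁻¹' (⋃ j, ⋃ (_ : a j = i), V j) ∩ stdSimplex ℝ I ↔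
      x ∈ W i ∩ stdSimplex ℝ I := by rw [hW]
    simpa [hx] using h1.symm
  obtain ⟨x, hx, hxW⟩ := HellyAux.kkm W hWo
    (by
      intro x hx
      obtain ⟨j, hj⟩ := Set.mem_iUnion.1 (hVcov ⟨x, hx, rfl⟩)
      exact Set.mem_iUnion.2 ⟨a j, (hWiff _ x hx).2 ⟨j, rfl, hj⟩⟩)
    (by
      intro i x hx hxW hxi
      obtain ⟨j, rfl, hj⟩ := (hWiff _ x hx).1 hxW
      refine ha j hj ⟨x, ⟨hx, fun k hk => ?_⟩, rfl⟩
      have : k = a j := by simpa using hk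
      rw [this, hxi])
  obtain ⟨s, hs, hsV⟩ := hVm (F x) ⟨x, hx, rfl⟩
  have hch : ∀ i, ∃ j, a j = i ∧ F x ∈ V j := fun i => (hWiff i x hx).1 (hxW i)
  choose b hb hbV using hch
  have hle : Fintype.card I ≤ s.card :=
    Finset.card_le_card_of_injOn b (s := Finset.univ) (fun i _ => hsV _ (hbV i))
      (fun i _ j _ h => by rw [← hb i, ← hb j, h])
  rw [Fintype.card_coe] at hle
  omega
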